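/- There is an absolute constant C such that for every integer n ≥ 1, every M ≥ 0, every Lipschitz function A : ℝ → ℝ with Lipschitz constant M, and every dyadic interval J ⊆ ℝ, Σ_{I dyadic, I ⊆ J} β_n(I)² |I| ≤ C · n³ · M² · |J|, where β_n(I) := inf_{a,b ∈ ℝ} sup_{x ∈ 3nI} |A(x) − (a + b x)| / |I|. -/

import Mathlib

open MeasureTheory

/-- The dyadic interval `[2^j m, 2^j (m+1))`. -/
noncomputable def dyadicI (j m : ℤ) : Set ℝ :=
  Set.Ico ((2 : ℝ) ^ j * m) ((2 : ℝ) ^ j * (m + 1))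

/-- The `n`-th dilated Jones beta number of `A : ℝ → ℝ` on the dyadic interval `[2^j m, 2^j(m+1))`:
the infimum over affine functions `a + b x` of the supremum of `|A x - (a + b x)|` over the
interval with the same center and `3n` times the length, normalized by the length `2^j`. -/
noncomputable def jonesBeta (n : ℕ) (A : ℝ → ℝ) (j m : ℤ) : ℝ :=
  ⨅ ab : ℝ × ℝ,
    (⨆ x ∈ Set.Icc ((2 : ℝ) ^ j * ((m : ℝ) + 1 / 2) - 3 * n * (2 : ℝ) ^ j / 2)
        ((2 : ℝ) ^ j * ((m : ℝ) + 1 / 2) + 3 * n * (2 : ℝ) ^ j / 2),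
      |A x - (ab.1 + ab.2 * x)|) / (2 : ℝ) ^ j

/-!
The beta numbers of a `K`-Lipschitz function with respect to its own chords satisfy the packing
condition because of two effects of bisecting a segment `ab` of length `ℓ`. By Apollonius' theorem,
the sum of `|f a - f b|² / ℓ` over the two halves exceeds its value on `ab` by `4 δ² / ℓ`, where `δ`
is the distance from `f` to the chord at the midpoint; as this quantity is at most `K² ℓ`, the terms
`δ² / ℓ` have a bounded sum. And the squared deviation from the chord is at most `3 δ²` plus `3 / 2`
times the sum of those of the halves, which after division by the lengths is a contraction by
`3 / 4`. Both are encoded in one Bellman function.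

For the dilated beta numbers, the `3n`-fold dilate of each dyadic `I ⊆ J` lies in a cell of length
`9n |I|` of one of two grids shifted against each other by a third of their top cell. On the cell
`Q`, `β_n(I)² |I|` is at most `9n` times the packing weight of `Q`, each `Q` serves at most `9n`
intervals `I`, and the top cells have length `9n |J|`: these are the three factors of `n`.
-/

open AffineMap (lineMap lineMap_apply_module lineMap_apply_one_sub lineMap_lineMap_right)
open Finset (range)
open scoped ENNReal NNReal

section BinaryTree

theorem sum_range_mul {α : Type*} [AddCommMonoid α] (f : ℕ → α) (m n : ℕ) :
    ∑ i ∈ range (m * n), f i = ∑ i ∈ range n, ∑ j ∈ range m, f (m * i + j) := by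
  induction n with
  | zero => simp
  | succ n ih => rw [mul_add_one, Finset.sum_range_add, ih, Finset.sum_range_succ]

theorem sum_range_two_pow_succ {α : Type*} [AddCommMonoid α] (f : ℕ → α) (k : ℕ) :
    ∑ i ∈ range (2 ^ (k + 1)), f i = ∑ i ∈ range (2 ^ k), (f (2 * i) + f (2 * i + 1)) := by
  rw [pow_succ', sum_range_mul]
  exact Finset.sum_congr rfl fun i _ => Finset.sum_range_succ _ _ |>.trans (by simp)

theorem sum_binaryTree_add_le {α : Type*} [AddCommMonoid α] [PartialOrder α]
    [IsOrderedAddMonoid α] {w Φ : ℕ → ℕ → α}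
    (h : ∀ k i, w k i + (Φ (k + 1) (2 * i) + Φ (k + 1) (2 * i + 1)) ≤ Φ k i) (N : ℕ) :
    ∑ k ∈ range N, ∑ i ∈ range (2 ^ k), w k i + ∑ i ∈ range (2 ^ N), Φ N i ≤ Φ 0 0 := by
  induction N with
  | zero => simp
  | succ N ih =>
    rw [Finset.sum_range_succ, add_assoc, sum_range_two_pow_succ, ← Finset.sum_add_distrib]
    exact (add_le_add_right (Finset.sum_le_sum fun i _ => h N i) _).trans ih

end BinaryTree

section Segment

variable {F : Type*} [AddCommGroup F] [Module ℝ F]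

theorem lineMap_eq_lineMap_midpoint (p q : F) (t : ℝ) :
    lineMap p q t = lineMap p (midpoint ℝ p q) (2 * t) := by
  rw [midpoint, lineMap_lineMap_right, mul_comm 2 t, mul_assoc, mul_invOf_self, mul_one]

/-- The left endpoint of the `i`-th of the `2 ^ k` equal pieces of the segment from `a` to `b`. -/
noncomputable def dyadicPoint (a b : F) (k i : ℕ) : F :=
  lineMap a b ((i : ℝ) / 2 ^ k)

@[simp]
theorem dyadicPoint_zero_zero (a b : F) : dyadicPoint a b 0 0 = a := by
  simp [dyadicPoint]

@[simp]
theorem dyadicPoint_zero_one (a b : F) : dyadicPoint a b 0 1 = b := by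
  simp [dyadicPoint]

theorem dyadicPoint_succ_two_mul (a b : F) (k i : ℕ) :
    dyadicPoint a b (k + 1) (2 * i) = dyadicPoint a b k i := by
  rw [dyadicPoint, dyadicPoint, pow_succ', Nat.cast_mul, Nat.cast_two,
    mul_div_mul_left _ _ two_ne_zero]

theorem dyadicPoint_succ_two_mul_add_one (a b : F) (k i : ℕ) :
    dyadicPoint a b (k + 1) (2 * i + 1) =
      midpoint ℝ (dyadicPoint a b k i) (dyadicPoint a b k (i + 1)) := by
  simp only [dyadicPoint, ← AffineMap.map_midpoint]
  congr 1
  rw [midpoint_eq_smul_add]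
  push_cast
  simp only [smul_eq_mul, invOf_eq_inv]
  field_simp
  ring

end Segment

section Chord

open scoped unitInterval

variable {F E : Type*} [NormedAddCommGroup F] [NormedSpace ℝ F]
  [NormedAddCommGroup E] [NormedSpace ℝ E]

/-- The maximal deviation, over the segment from `a` to `b`, of `f` from the affine interpolation
of its values at `a` and `b`. Parametrizing the segment by the unit interval makes it meaningful
without `a ≠ b`, and without an order on the domain. -/
noncomputable def chordDev (f : F → E) (a b : F) : ℝ :=
  ⨆ t : I, dist (f (lineMap a b (t : ℝ))) (lineMap (f a) (f b) (t : ℝ))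

variable {f : F → E} {a b : F}

theorem chordDev_nonneg : 0 ≤ chordDev f a b :=
  Real.iSup_nonneg fun _ => dist_nonneg

theorem dist_lineMap_le_chordDev (hf : Continuous f) {t : ℝ} (ht : t ∈ I) :
    dist (f (lineMap a b t)) (lineMap (f a) (f b) t) ≤ chordDev f a b := by
  have hcont : Continuous fun t : I =>
      dist (f (lineMap a b (t : ℝ))) (lineMap (f a) (f b) (t : ℝ)) := by fun_prop
  exact le_ciSup (isCompact_range hcont).bddAbove ⟨t, ht⟩

theorem chordDev_le {c : ℝ}
    (h : ∀ t ∈ I, dist (f (lineMap a b t)) (lineMap (f a) (f b) t) ≤ c) :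
    chordDev f a b ≤ c :=
  ciSup_le fun t => h t t.2

theorem chordDev_comm (f : F → E) (a b : F) : chordDev f a b = chordDev f b a :=
  unitInterval.symm_bijective.surjective.iSup_congr _ fun t => by
    simp only [unitInterval.coe_symm_eq, lineMap_apply_one_sub]

theorem dist_lineMap_le_add (p q y : E) {t : ℝ} (ht : t ∈ I) :
    dist y (lineMap p q t) ≤ (1 - t) * dist y p + t * dist y q := by
  simpa only [lineMap_apply_module, smul_eq_mul, dist_comm _ y] using
    (convexOn_univ_dist y).2 (Set.mem_univ p) (Set.mem_univ q) (sub_nonneg.2 ht.2) ht.1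
      (sub_add_cancel 1 t)

theorem chordDev_le_of_lipschitzWith {K : ℝ≥0} (hf : LipschitzWith K f) (a b : F) :
    chordDev f a b ≤ K * dist a b / 2 := by
  refine chordDev_le fun t ht => ?_
  have ht' : 0 ≤ 1 - t := sub_nonneg.2 ht.2
  have ha := hf.dist_le_mul (lineMap a b t) a
  have hb := hf.dist_le_mul (lineMap a b t) b
  rw [dist_lineMap_left, Real.norm_of_nonneg ht.1] at ha
  rw [dist_lineMap_right, Real.norm_of_nonneg ht'] at hb
  calc dist (f (lineMap a b t)) (lineMap (f a) (f b) t)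
      ≤ (1 - t) * dist (f (lineMap a b t)) (f a) + t * dist (f (lineMap a b t)) (f b) :=
        dist_lineMap_le_add _ _ _ ht
    _ ≤ (1 - t) * (K * (t * dist a b)) + t * (K * ((1 - t) * dist a b)) :=
        add_le_add (mul_le_mul_of_nonneg_left ha ht') (mul_le_mul_of_nonneg_left hb ht.1)
    _ = K * dist a b * (2 * (t * (1 - t))) := by ring
    _ ≤ K * dist a b * (1 / 2) := by
        gcongr
        nlinarith [sq_nonneg (1 - 2 * t)]
    _ = K * dist a b / 2 := by ring

theorem dist_lineMap_lineMap_left (p q q' : E) (t : ℝ) :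
    dist (lineMap p q t) (lineMap p q' t) = |t| * dist q q' := by
  simp [AffineMap.lineMap_apply_module', dist_smul₀]

theorem dist_lineMap_le_of_le_half (hf : Continuous f) {t : ℝ} (ht0 : 0 ≤ t) (ht : t ≤ 1 / 2) :
    dist (f (lineMap a b t)) (lineMap (f a) (f b) t) ≤
      chordDev f a (midpoint ℝ a b) + dist (f (midpoint ℝ a b)) (midpoint ℝ (f a) (f b)) := by
  have h2t : 2 * t ∈ I := ⟨by linarith, by linarith⟩
  rw [lineMap_eq_lineMap_midpoint a b, lineMap_eq_lineMap_midpoint (f a)]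
  refine (dist_triangle _ (lineMap (f a) (f (midpoint ℝ a b)) (2 * t)) _).trans
    (add_le_add (dist_lineMap_le_chordDev hf h2t) ?_)
  rw [dist_lineMap_lineMap_left, abs_of_nonneg h2t.1]
  exact mul_le_of_le_one_left dist_nonneg h2t.2

theorem chordDev_le_midpoint (hf : Continuous f) :
    chordDev f a b ≤ dist (f (midpoint ℝ a b)) (midpoint ℝ (f a) (f b)) +
      max (chordDev f a (midpoint ℝ a b)) (chordDev f (midpoint ℝ a b) b) := by
  refine chordDev_le fun t ht => ?_
  rcases le_total t (1 / 2) with hle | hge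
  · linarith [dist_lineMap_le_of_le_half (a := a) (b := b) hf ht.1 hle,
      le_max_left (chordDev f a (midpoint ℝ a b)) (chordDev f (midpoint ℝ a b) b)]
  · have h := dist_lineMap_le_of_le_half (a := b) (b := a) (t := 1 - t) hf
      (sub_nonneg.2 ht.2) (by linarith)
    rw [lineMap_apply_one_sub, lineMap_apply_one_sub, midpoint_comm b, midpoint_comm (f b),
      chordDev_comm] at h
    linarith [le_max_right (chordDev f a (midpoint ℝ a b)) (chordDev f (midpoint ℝ a b) b)]

theorem chordDev_sq_le (hf : Continuous f) :
    chordDev f a b ^ 2 ≤ 3 * dist (f (midpoint ℝ a b)) (midpoint ℝ (f a) (f b)) ^ 2 +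
      3 / 2 * (chordDev f a (midpoint ℝ a b) ^ 2 + chordDev f (midpoint ℝ a b) b ^ 2) := by
  set δ := dist (f (midpoint ℝ a b)) (midpoint ℝ (f a) (f b))
  set u := chordDev f a (midpoint ℝ a b)
  set v := chordDev f (midpoint ℝ a b) b
  have hmax : max u v ^ 2 ≤ u ^ 2 + v ^ 2 := by
    rcases max_choice u v with h | h <;> rw [h] <;> linarith [sq_nonneg u, sq_nonneg v]
  calc chordDev f a b ^ 2 ≤ (δ + max u v) ^ 2 :=
        pow_le_pow_left₀ chordDev_nonneg (chordDev_le_midpoint hf) 2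
    _ ≤ 3 * δ ^ 2 + 3 / 2 * max u v ^ 2 := by linarith [sq_nonneg (2 * δ - max u v)]
    _ ≤ 3 * δ ^ 2 + 3 / 2 * (u ^ 2 + v ^ 2) := by gcongr

/-- The scale-invariant packing weight `β² |ab|` of the segment from `a` to `b`, where
`β = chordDev f a b / |ab|` is the Jones beta number of `f` relative to its chord. -/
noncomputable def chordEnergy (f : F → E) (a b : F) : ℝ :=
  chordDev f a b ^ 2 / dist a b

/-- The Bellman function of the packing estimate: a nonnegative function of segments, at most a
multiple of the length, which drops by at least `chordEnergy f a b` when the segment is bisected.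
The first term pays for the displacement of the midpoint, the second one for the factor `3 / 4` in
the comparison of a segment with its halves. -/
noncomputable def chordBellman (K : ℝ) (f : F → E) (a b : F) : ℝ :=
  3 * (K ^ 2 * dist a b - dist (f a) (f b) ^ 2 / dist a b) +
    3 * (K ^ 2 * dist a b / 4 - chordEnergy f a b)

theorem chordEnergy_nonneg (f : F → E) (a b : F) : 0 ≤ chordEnergy f a b :=
  div_nonneg (sq_nonneg _) dist_nonneg

theorem chordBellman_le (K : ℝ) (f : F → E) (a b : F) :
    chordBellman K f a b ≤ 15 / 4 * K ^ 2 * dist a b := by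
  have h : 0 ≤ dist (f a) (f b) ^ 2 / dist a b := by positivity
  rw [chordBellman]
  linarith [chordEnergy_nonneg f a b]

theorem chordBellman_nonneg {K : ℝ≥0} {f : F → E} (hf : LipschitzWith K f) (a b : F) :
    0 ≤ chordBellman K f a b := by
  have hincr : dist (f a) (f b) ^ 2 / dist a b ≤ K ^ 2 * dist a b := by
    refine div_le_of_le_mul₀ dist_nonneg (by positivity) ?_
    calc dist (f a) (f b) ^ 2 ≤ (K * dist a b) ^ 2 := by gcongr; exact hf.dist_le_mul a b
      _ = K ^ 2 * dist a b * dist a b := by ring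
  have henergy : chordEnergy f a b ≤ K ^ 2 * dist a b / 4 := by
    refine div_le_of_le_mul₀ dist_nonneg (by positivity) ?_
    calc chordDev f a b ^ 2 ≤ (K * dist a b / 2) ^ 2 :=
          pow_le_pow_left₀ chordDev_nonneg (chordDev_le_of_lipschitzWith hf a b) 2
      _ = K ^ 2 * dist a b / 4 * dist a b := by ring
  rw [chordBellman]
  linarith

end Chord

section InnerProductSpace

variable {F E : Type*} [NormedAddCommGroup F] [NormedSpace ℝ F]
  [NormedAddCommGroup E] [InnerProductSpace ℝ E]

theorem chordEnergy_add_chordBellman_le (K : ℝ) {f : F → E} (hf : Continuous f) (a b : F) :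
    chordEnergy f a b +
        (chordBellman K f a (midpoint ℝ a b) + chordBellman K f (midpoint ℝ a b) b) ≤
      chordBellman K f a b := by
  have hleft : dist a (midpoint ℝ a b) = dist a b / 2 := by
    rw [dist_left_midpoint, Real.norm_two, inv_mul_eq_div]
  have hright : dist (midpoint ℝ a b) b = dist a b / 2 := by
    rw [dist_midpoint_right, Real.norm_two, inv_mul_eq_div]
  have apollonius :=
    EuclideanGeometry.dist_sq_add_dist_sq_eq_two_mul_dist_midpoint_sq_add_half_dist_sq
      (f (midpoint ℝ a b)) (f a) (f b)
  rw [dist_comm _ (f a)] at apollonius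
  have hdev := div_le_div_of_nonneg_right (chordDev_sq_le hf (a := a) (b := b)) dist_nonneg
    (c := dist a b)
  have hincr := congrArg (· / dist a b) apollonius
  simp only [chordBellman, chordEnergy, hleft, hright]
  ring_nf at hdev hincr ⊢
  linarith

theorem sum_chordEnergy_le {K : ℝ≥0} {f : F → E} (hf : LipschitzWith K f)
    (a b : F) (N : ℕ) :
    ∑ k ∈ range N, ∑ i ∈ range (2 ^ k),
        chordEnergy f (dyadicPoint a b k i) (dyadicPoint a b k (i + 1)) ≤
      15 / 4 * K ^ 2 * dist a b := by
  have hsplit (k i : ℕ) := chordEnergy_add_chordBellman_le K hf.continuous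
    (dyadicPoint a b k i) (dyadicPoint a b k (i + 1))
  simp_rw [← dyadicPoint_succ_two_mul_add_one] at hsplit
  have hpack := sum_binaryTree_add_le
    (w := fun k i => chordEnergy f (dyadicPoint a b k i) (dyadicPoint a b k (i + 1)))
    (Φ := fun k i => chordBellman K f (dyadicPoint a b k i) (dyadicPoint a b k (i + 1)))
    (fun k i => by
      simpa only [add_assoc, ← mul_add_one, one_add_one_eq_two, dyadicPoint_succ_two_mul]
        using hsplit k i) N
  have hnonneg : 0 ≤ ∑ i ∈ range (2 ^ N),
      chordBellman K f (dyadicPoint a b N i) (dyadicPoint a b N (i + 1)) :=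
    Finset.sum_nonneg fun i _ => chordBellman_nonneg hf _ _
  have htop := chordBellman_le K f (dyadicPoint a b 0 0) (dyadicPoint a b 0 1)
  simp only [dyadicPoint_zero_zero, dyadicPoint_zero_one, zero_add] at hpack htop
  linarith

end InnerProductSpace

section Covering

theorem sum_range_div_le {α : Type*} [Semiring α] [PartialOrder α] [IsOrderedAddMonoid α]
    {g : ℕ → α} (hg : ∀ i, 0 ≤ g i) {q c P Q : ℕ} (hq : 0 < q)
    (hP : c + P ≤ q * Q) :
    ∑ r ∈ range P, g ((c + r) / q) ≤ q * ∑ i ∈ range Q, g i :=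
  calc ∑ r ∈ range P, g ((c + r) / q)
      ≤ ∑ x ∈ range c, g (x / q) + ∑ r ∈ range P, g ((c + r) / q) :=
        le_add_of_nonneg_left (Finset.sum_nonneg fun _ _ => hg _)
    _ = ∑ x ∈ range (c + P), g (x / q) := (Finset.sum_range_add _ _ _).symm
    _ ≤ ∑ x ∈ range (q * Q), g (x / q) :=
        Finset.sum_le_sum_of_subset_of_nonneg (Finset.range_subset_range.2 hP) fun _ _ _ => hg _
    _ = ∑ i ∈ range Q, ∑ _j ∈ range q, g i := by
        rw [sum_range_mul]
        refine Finset.sum_congr rfl fun i _ => Finset.sum_congr rfl fun _ hj => ?_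
        rw [Nat.mul_add_div hq, Nat.div_eq_of_lt (Finset.mem_range.1 hj), add_zero]
    _ = q * ∑ i ∈ range Q, g i := by
        simp only [Finset.sum_const, Finset.card_range, nsmul_eq_mul, Finset.mul_sum]

section Round

variable {𝕜 : Type*} [Field 𝕜] [LinearOrder 𝕜] [IsStrictOrderedRing 𝕜] [FloorRing 𝕜]

theorem le_abs_sub_round_iff {u δ : 𝕜} :
    δ ≤ |u - round u| ↔ ⌊u⌋ + δ ≤ u ∧ u + δ ≤ ⌊u⌋ + 1 := by
  rw [abs_sub_round_eq_min, le_min_iff, Int.fract]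
  constructor <;> rintro ⟨h₁, h₂⟩ <;> constructor <;> linarith

-- The one-third trick: otherwise `k / 3` would be within `1 / 3` of an integer.
theorem one_sixth_le_abs_sub_round_or (u : 𝕜) {k : ℤ} (hk : ¬ 3 ∣ k) :
    1 / 6 ≤ |u - round u| ∨ 1 / 6 ≤ |u + k / 3 - round (u + k / 3)| := by
  by_contra! h
  obtain ⟨h₁, h₂⟩ := h
  rw [abs_lt] at h₁ h₂
  set z := round (u + k / 3) - round u with hz
  have hcast : (z : 𝕜) = round (u + k / 3) - round u := by rw [hz, Int.cast_sub]
  have hlt : (k - 3 * z : 𝕜) < 1 := by linarith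
  have hgt : (-1 : 𝕜) < k - 3 * z := by linarith
  norm_cast at hlt hgt
  omega

end Round

theorem exists_shift_add_one_sixth_le {q d k : ℕ} (hq : q = 3 * d) (hd : 0 < d) (hk : ¬ 3 ∣ k)
    (r : ℕ) :
    ∃ s ∈ range 2,
      (((d * s * k + r) / q : ℕ) + 1 / 6 : ℝ) ≤ (d * s * k + r + 1 / 2) / q ∧
        ((d * s * k + r + 1 / 2) / q + 1 / 6 : ℝ) ≤ ((d * s * k + r) / q : ℕ) + 1 := by
  set u : ℕ → ℝ := fun s => (d * s * k + r + 1 / 2) / q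
  have hfloor (s : ℕ) : ⌊u s⌋ = (((d * s * k + r) / q : ℕ) : ℤ) := by
    have hcast : u s = ((d * s * k + r : ℕ) + 1 / 2) / q := by push_cast; rfl
    rw [hcast, Int.floor_div_natCast, Int.floor_natCast_add]
    norm_num
  have hshift : u 1 = u 0 + (k : ℤ) / 3 := by
    simp only [u, hq]
    push_cast
    field_simp
    ring
  have hfar : ∃ s ∈ range 2, 1 / 6 ≤ |u s - round (u s)| := by
    rcases one_sixth_le_abs_sub_round_or (u 0) (k := k) (by exact_mod_cast hk) with h | h
    · exact ⟨0, by simp, h⟩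
    · exact ⟨1, by simp, hshift ▸ h⟩
  obtain ⟨s, hs, h⟩ := hfar
  refine ⟨s, hs, ?_⟩
  simpa only [hfloor, Int.cast_natCast] using le_abs_sub_round_iff.1 h

end Covering

section JonesBeta

variable {n : ℕ} {A : ℝ → ℝ} {j m : ℤ}

theorem jonesBeta_nonneg (n : ℕ) (A : ℝ → ℝ) (j m : ℤ) : 0 ≤ jonesBeta n A j m :=
  Real.iInf_nonneg fun _ => div_nonneg
    (Real.iSup_nonneg fun _ => Real.iSup_nonneg fun _ => abs_nonneg _) (by positivity)

theorem jonesBeta_le {α β c : ℝ} (hc : 0 ≤ c)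
    (h : ∀ x ∈ Set.Icc ((2 : ℝ) ^ j * ((m : ℝ) + 1 / 2) - 3 * n * (2 : ℝ) ^ j / 2)
        ((2 : ℝ) ^ j * ((m : ℝ) + 1 / 2) + 3 * n * (2 : ℝ) ^ j / 2), |A x - (α + β * x)| ≤ c) :
    jonesBeta n A j m ≤ c / (2 : ℝ) ^ j := by
  refine (ciInf_le ⟨0, ?_⟩ (α, β)).trans ?_
  · rintro _ ⟨ab, rfl⟩
    exact div_nonneg (Real.iSup_nonneg fun _ => Real.iSup_nonneg fun _ => abs_nonneg _)
      (by positivity)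
  · gcongr
    exact Real.iSup_le (fun x => Real.iSup_le (h x) hc) hc

theorem abs_sub_slope_le_chordDev (hA : Continuous A) {a b x : ℝ} (hx : x ∈ Set.Icc a b) :
    |A x - (A a - slope A a b * a + slope A a b * x)| ≤ chordDev A a b := by
  rw [← segment_eq_Icc (hx.1.trans hx.2), segment_eq_image_lineMap] at hx
  obtain ⟨t, ht, rfl⟩ := hx
  have hslope : (b - a) * slope A a b = A b - A a := sub_smul_slope A a b
  convert dist_lineMap_le_chordDev hA ht using 1
  rw [Real.dist_eq, AffineMap.lineMap_apply_module' (A a)]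
  congr 2
  rw [smul_eq_mul, ← hslope, AffineMap.lineMap_apply_module', smul_eq_mul]
  ring

theorem jonesBeta_le_chordDev_div (hA : Continuous A) {a b : ℝ}
    (ha : a ≤ (2 : ℝ) ^ j * (m + 1 / 2) - 3 * n * (2 : ℝ) ^ j / 2)
    (hb : (2 : ℝ) ^ j * (m + 1 / 2) + 3 * n * (2 : ℝ) ^ j / 2 ≤ b) :
    jonesBeta n A j m ≤ chordDev A a b / (2 : ℝ) ^ j :=
  jonesBeta_le chordDev_nonneg fun _ hx =>
    abs_sub_slope_le_chordDev hA (Set.Icc_subset_Icc ha hb hx)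

/-- The `i`-th point of generation `p` of the grid with cells of length `9n |I|`, where `I` runs
over the dyadic subintervals of generation `p` of `J = [2^j m, 2^j (m + 1))`. Its top cell has
length `9n |J|` and starts `s` thirds of that length to the left of `J`. -/
noncomputable def shiftedGrid (n : ℕ) (j m : ℤ) (s p i : ℕ) : ℝ :=
  dyadicPoint ((2 : ℝ) ^ j * (m - 3 * n * s)) ((2 : ℝ) ^ j * (m - 3 * n * s + 9 * n)) p i

theorem shiftedGrid_eq (n : ℕ) (j m : ℤ) (s p i : ℕ) :
    shiftedGrid n j m s p i =
      (2 : ℝ) ^ (j - p) * (2 ^ p * m - 3 * n * s * 2 ^ p + 9 * n * i) := by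
  rw [shiftedGrid, dyadicPoint, AffineMap.lineMap_apply_module', smul_eq_mul,
    zpow_sub₀ two_ne_zero, zpow_natCast]
  field_simp
  ring

theorem dist_shiftedGrid (n : ℕ) (j m : ℤ) (s p i : ℕ) :
    dist (shiftedGrid n j m s p i) (shiftedGrid n j m s p (i + 1)) =
      9 * n * (2 : ℝ) ^ (j - p) := by
  rw [dist_comm, shiftedGrid_eq, shiftedGrid_eq, Real.dist_eq, ← mul_sub, abs_of_nonneg]
  · push_cast
    ring
  · push_cast
    ring_nf
    positivity

theorem jonesBeta_sq_mul_le (hn : 1 ≤ n) (hA : Continuous A) {s p r i : ℕ}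
    (hleft : (i + 1 / 6 : ℝ) ≤ (3 * n * s * 2 ^ p + r + 1 / 2) / (9 * n))
    (hright : (3 * n * s * 2 ^ p + r + 1 / 2) / (9 * n) + 1 / 6 ≤ (i + 1 : ℝ)) :
    jonesBeta n A (j - p) (2 ^ p * m + r) ^ 2 * (2 : ℝ) ^ (j - p) ≤
      9 * n * chordEnergy A (shiftedGrid n j m s p i) (shiftedGrid n j m s p (i + 1)) := by
  have hn₀ : (0 : ℝ) < n := by exact_mod_cast hn
  have hβ : jonesBeta n A (j - p) (2 ^ p * m + r) ≤
      chordDev A (shiftedGrid n j m s p i) (shiftedGrid n j m s p (i + 1)) / 2 ^ (j - p) := by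
    have hscale : (0 : ℝ) < 2 ^ (j - p) := by positivity
    have hlower : 9 * n * i + 3 * n / 2 ≤ (3 * n * s * 2 ^ p + r + 1 / 2 : ℝ) := by
      rw [le_div_iff₀ (by positivity)] at hleft
      linarith
    have hupper : 3 * n * s * 2 ^ p + r + 1 / 2 + 3 * n / 2 ≤ (9 * n * (i + 1) : ℝ) := by
      rw [← le_sub_iff_add_le, div_le_iff₀ (by positivity)] at hright
      linarith
    apply jonesBeta_le_chordDev_div hA <;> rw [shiftedGrid_eq] <;> push_cast
    · linarith [mul_le_mul_of_nonneg_left hlower hscale.le]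
    · linarith [mul_le_mul_of_nonneg_left hupper hscale.le]
  calc jonesBeta n A (j - p) (2 ^ p * m + r) ^ 2 * (2 : ℝ) ^ (j - p)
      ≤ (chordDev A (shiftedGrid n j m s p i) (shiftedGrid n j m s p (i + 1)) /
          2 ^ (j - p)) ^ 2 * (2 : ℝ) ^ (j - p) := by
        gcongr
        exact jonesBeta_nonneg n A _ _
    _ = 9 * n * chordEnergy A (shiftedGrid n j m s p i) (shiftedGrid n j m s p (i + 1)) := by
        rw [chordEnergy, dist_shiftedGrid]
        field_simp

theorem sum_jonesBeta_generation_le (hn : 1 ≤ n) (hA : Continuous A) (j m : ℤ) (p : ℕ) :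
    ∑ r ∈ range (2 ^ p), jonesBeta n A (j - p) (2 ^ p * m + r) ^ 2 * (2 : ℝ) ^ (j - p) ≤
      (9 * n) ^ 2 * ∑ s ∈ range 2, ∑ i ∈ range (2 ^ p),
        chordEnergy A (shiftedGrid n j m s p i) (shiftedGrid n j m s p (i + 1)) := by
  set e : ℕ → ℕ → ℝ := fun s i =>
    chordEnergy A (shiftedGrid n j m s p i) (shiftedGrid n j m s p (i + 1))
  have he (s i : ℕ) : 0 ≤ e s i := chordEnergy_nonneg _ _ _
  have hpow : ¬ 3 ∣ 2 ^ p := fun h =>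
    absurd (Nat.prime_three.dvd_of_dvd_pow h) (by decide : ¬ 3 ∣ 2)
  have hcell (r : ℕ) : jonesBeta n A (j - p) (2 ^ p * m + r) ^ 2 * (2 : ℝ) ^ (j - p) ≤
      9 * n * ∑ s ∈ range 2, e s ((3 * n * s * 2 ^ p + r) / (9 * n)) := by
    obtain ⟨s, hs, hleft, hright⟩ := exists_shift_add_one_sixth_le (q := 9 * n) (d := 3 * n)
      (by ring) (by positivity) hpow r
    push_cast at hleft hright
    refine (jonesBeta_sq_mul_le hn hA (by exact_mod_cast hleft) (by exact_mod_cast hright)).trans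
      (mul_le_mul_of_nonneg_left ?_ (by positivity))
    exact Finset.single_le_sum (f := fun s => e s ((3 * n * s * 2 ^ p + r) / (9 * n)))
      (fun s _ => he s _) hs
  have hcount (s : ℕ) (hs : s ∈ range 2) :
      ∑ r ∈ range (2 ^ p), e s ((3 * n * s * 2 ^ p + r) / (9 * n)) ≤
        9 * n * ∑ i ∈ range (2 ^ p), e s i := by
    have hfit : 3 * n * s * 2 ^ p + 2 ^ p ≤ 9 * n * 2 ^ p := by
      rw [← add_one_mul]
      gcongr
      have := Finset.mem_range.1 hs
      interval_cases s <;> omega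
    exact_mod_cast sum_range_div_le (he s) (by omega) hfit
  calc _ ≤ ∑ r ∈ range (2 ^ p),
        9 * n * ∑ s ∈ range 2, e s ((3 * n * s * 2 ^ p + r) / (9 * n)) :=
        Finset.sum_le_sum fun r _ => hcell r
    _ = 9 * n * ∑ s ∈ range 2, ∑ r ∈ range (2 ^ p), e s ((3 * n * s * 2 ^ p + r) / (9 * n)) := by
        rw [← Finset.mul_sum, Finset.sum_comm]
    _ ≤ 9 * n * ∑ s ∈ range 2, 9 * n * ∑ i ∈ range (2 ^ p), e s i := by
        gcongr with s hs
        exact hcount s hs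
    _ = (9 * n) ^ 2 * ∑ s ∈ range 2, ∑ i ∈ range (2 ^ p), e s i := by
        rw [← Finset.mul_sum]
        ring

theorem sum_jonesBeta_le (hn : 1 ≤ n) {K : ℝ≥0} (hA : LipschitzWith K A) (j m : ℤ) (N : ℕ) :
    ∑ p ∈ range N, ∑ r ∈ range (2 ^ p),
        jonesBeta n A (j - p) (2 ^ p * m + r) ^ 2 * (2 : ℝ) ^ (j - p) ≤
      2 * 9 ^ 3 * (15 / 4) * n ^ 3 * K ^ 2 * (2 : ℝ) ^ j := by
  have hgrid (s : ℕ) : ∑ p ∈ range N, ∑ i ∈ range (2 ^ p),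
      chordEnergy A (shiftedGrid n j m s p i) (shiftedGrid n j m s p (i + 1)) ≤
        15 / 4 * K ^ 2 * (9 * n * (2 : ℝ) ^ j) := by
    have hlength := dist_shiftedGrid n j m s 0 0
    simp only [shiftedGrid, zero_add, dyadicPoint_zero_zero, dyadicPoint_zero_one,
      Nat.cast_zero, sub_zero] at hlength
    exact hlength ▸ sum_chordEnergy_le hA _ _ N
  calc _ ≤ ∑ p ∈ range N, (9 * n : ℝ) ^ 2 * ∑ s ∈ range 2, ∑ i ∈ range (2 ^ p),
          chordEnergy A (shiftedGrid n j m s p i) (shiftedGrid n j m s p (i + 1)) :=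
        Finset.sum_le_sum fun p _ => sum_jonesBeta_generation_le hn hA.continuous j m p
    _ = (9 * n) ^ 2 * ∑ s ∈ range 2, ∑ p ∈ range N, ∑ i ∈ range (2 ^ p),
          chordEnergy A (shiftedGrid n j m s p i) (shiftedGrid n j m s p (i + 1)) := by
        rw [← Finset.mul_sum, Finset.sum_comm]
    _ ≤ (9 * n) ^ 2 * ∑ s ∈ range 2, 15 / 4 * K ^ 2 * (9 * n * (2 : ℝ) ^ j) := by
        gcongr with s
        exact hgrid s
    _ = 2 * 9 ^ 3 * (15 / 4) * n ^ 3 * K ^ 2 * (2 : ℝ) ^ j := by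
        rw [Finset.sum_const, Finset.card_range, nsmul_eq_mul]
        push_cast
        ring

end JonesBeta

section DyadicIntervals

theorem dyadicI_sub_subset_dyadicI_iff {j m k : ℤ} {p : ℕ} :
    dyadicI (j - p) k ⊆ dyadicI j m ↔ 2 ^ p * m ≤ k ∧ k + 1 ≤ 2 ^ p * (m + 1) := by
  have hscale : (0 : ℝ) < 2 ^ (j - p) := by positivity
  have hj : (2 : ℝ) ^ j = 2 ^ (j - p) * 2 ^ p := by
    rw [← zpow_natCast, ← zpow_add₀ two_ne_zero, sub_add_cancel]
  rw [dyadicI, dyadicI, Set.Ico_subset_Ico_iff (by gcongr; exact lt_add_one _), hj, mul_assoc,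
    mul_assoc, mul_le_mul_iff_right₀ hscale, mul_le_mul_iff_right₀ hscale]
  norm_cast

theorem le_of_dyadicI_subset {j m j' m' : ℤ} (h : dyadicI j' m' ⊆ dyadicI j m) : j' ≤ j := by
  obtain ⟨hleft, hright⟩ := (Set.Ico_subset_Ico_iff (by gcongr; exact lt_add_one _)).1 h
  exact (zpow_le_zpow_iff_right₀ one_lt_two).1 (by linarith : (2 : ℝ) ^ j' ≤ 2 ^ j)

theorem dyadicI_subset_dyadicI_iff {j m j' m' : ℤ} :
    dyadicI j' m' ⊆ dyadicI j m ↔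
      ∃ p r : ℕ, r < 2 ^ p ∧ j' = j - p ∧ m' = 2 ^ p * m + r := by
  constructor
  · intro h
    obtain ⟨p, hp⟩ := Int.le.dest (le_of_dyadicI_subset h)
    obtain rfl : j' = j - p := by omega
    obtain ⟨hleft, hright⟩ := dyadicI_sub_subset_dyadicI_iff.1 h
    obtain ⟨r, hr⟩ := Int.le.dest hleft
    refine ⟨p, r, ?_, rfl, hr.symm⟩
    zify
    linarith
  · rintro ⟨p, r, hr, rfl, rfl⟩
    zify at hr
    exact dyadicI_sub_subset_dyadicI_iff.2 ⟨by linarith, by linarith⟩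

theorem tsum_dyadicI_subset (g : ℤ → ℤ → ℝ≥0∞) (j m : ℤ) :
    ∑' I : {q : ℤ × ℤ // dyadicI q.1 q.2 ⊆ dyadicI j m}, g I.1.1 I.1.2 =
      ∑' p : ℕ, ∑ r ∈ range (2 ^ p), g (j - p) (2 ^ p * m + r) := by
  let e : (Σ p : ℕ, Fin (2 ^ p)) → {q : ℤ × ℤ // dyadicI q.1 q.2 ⊆ dyadicI j m} := fun x =>
    ⟨(j - x.1, 2 ^ x.1 * m + x.2),
      dyadicI_subset_dyadicI_iff.2 ⟨x.1, x.2, x.2.isLt, rfl, rfl⟩⟩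
  have he : Function.Bijective e := by
    constructor
    · rintro ⟨p, r⟩ ⟨p', r'⟩ h
      obtain ⟨hp, hr⟩ := Prod.ext_iff.1 (congrArg Subtype.val h)
      obtain rfl : p = p' := by simpa [e] using hp
      obtain rfl : r = r' := by simpa [e, Fin.ext_iff] using hr
      rfl
    · rintro ⟨⟨j', m'⟩, h⟩
      obtain ⟨p, r, hr, hj, hm⟩ := dyadicI_subset_dyadicI_iff.1 h
      exact ⟨⟨p, r, hr⟩, Subtype.ext (Prod.ext hj.symm hm.symm)⟩
  rw [← (Equiv.ofBijective e he).tsum_eq, ENNReal.tsum_sigma']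
  refine tsum_congr fun p => ?_
  rw [tsum_fintype]
  exact Fin.sum_univ_eq_sum_range (fun r : ℕ => g (j - p) (2 ^ p * m + r)) (2 ^ p)

end DyadicIntervals

/-- Carleson packing condition, with polynomial growth `n³`, for the dilated Jones beta numbers
of a Lipschitz function. -/
theorem stmt14 : ∃ C : ℝ, 0 < C ∧ ∀ n : ℕ, 1 ≤ n → ∀ M : ℝ, 0 ≤ M → ∀ A : ℝ → ℝ,
    LipschitzWith (Real.toNNReal M) A → ∀ jJ mJ : ℤ,
    ∑' I : {q : ℤ × ℤ // dyadicI q.1 q.2 ⊆ dyadicI jJ mJ},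
        ENNReal.ofReal (jonesBeta n A I.1.1 I.1.2 ^ 2 * (2 : ℝ) ^ I.1.1) ≤
      ENNReal.ofReal (C * n ^ 3 * M ^ 2 * (2 : ℝ) ^ jJ) := by
  refine ⟨2 * 9 ^ 3 * (15 / 4), by norm_num, fun n hn M hM A hA jJ mJ => ?_⟩
  rw [tsum_dyadicI_subset fun j m => ENNReal.ofReal (jonesBeta n A j m ^ 2 * (2 : ℝ) ^ j)]
  refine ENNReal.tsum_le_of_sum_range_le fun N => ?_
  have hterm (p r : ℕ) :
      0 ≤ jonesBeta n A (jJ - p) (2 ^ p * mJ + r) ^ 2 * (2 : ℝ) ^ (jJ - p) := by positivity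
  simp_rw [← ENNReal.ofReal_sum_of_nonneg fun r _ => hterm _ r]
  rw [← ENNReal.ofReal_sum_of_nonneg fun p _ => Finset.sum_nonneg fun r _ => hterm p r]
  refine ENNReal.ofReal_le_ofReal ?_
  simpa only [Real.coe_toNNReal M hM] using sum_jonesBeta_le hn hA jJ mJ N
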